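/- Let N, M, d, G be positive integers, H an N×M complex matrix, σ > 0, and g₀ ∈ {1,…,G}. For a family V = (V_1,…,V_G) of M×d complex matrices define X(V) = Σ_{g=1}^G H V_g V_gᴴ Hᴴ + σ² I_N and J(V) = (X(V) − H V_{g₀} V_{g₀}ᴴ Hᴴ)⁻¹. Fix an expansion family V⁰ = (V⁰_1,…,V⁰_G) and set U⁰ = X(V⁰)⁻¹ H V⁰_{g₀}, Q⁰ = I_d − (U⁰)ᴴ H V⁰_{g₀}. Fix reals F, C⁰, η⁰ and define A = Hᴴ U⁰ (Q⁰)⁻¹ (U⁰)ᴴ H, B = −(Q⁰)⁻¹ (U⁰)ᴴ H, b = Re Tr((Q⁰)⁻¹ (I_d + σ² (U⁰)ᴴ U⁰)) + log((det Q⁰).re) + (η⁰ + C⁰)²/2 − d, and the surrogate f(C, η, V) = Σ_{g=1}^G Re Tr(V_gᴴ A V_g) + 2 Re Tr(B V_{g₀}) + (η² + C²)/2 + F η − (η⁰ + C⁰)(η + C) + b. Then for all reals C, η and every family V of M×d complex matrices, f(C, η, V) ≥ (F − C) η − log((det(I_N + H V_{g₀} V_{g₀}ᴴ Hᴴ J(V))).re).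 -/

import Mathlib

open Matrix BigOperators

/-- The interference-plus-signal covariance `X(V) = ∑ g, H V_g V_gᴴ Hᴴ + σ² I_N`. -/
noncomputable def Xmat {N M d G : ℕ} (H : Matrix (Fin N) (Fin M) ℂ) (σ : ℝ)
    (V : Fin G → Matrix (Fin M) (Fin d) ℂ) : Matrix (Fin N) (Fin N) ℂ :=
  (∑ g, H * V g * (V g)ᴴ * Hᴴ) + ((σ : ℂ) ^ 2) • (1 : Matrix (Fin N) (Fin N) ℂ)

/-- `J(V) = (X(V) − H V_{g₀} V_{g₀}ᴴ Hᴴ)⁻¹`, the inverse interference-plus-noise covariance. -/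
noncomputable def Jmat {N M d G : ℕ} (H : Matrix (Fin N) (Fin M) ℂ) (σ : ℝ) (g₀ : Fin G)
    (V : Fin G → Matrix (Fin M) (Fin d) ℂ) : Matrix (Fin N) (Fin N) ℂ :=
  (Xmat H σ V - H * V g₀ * (V g₀)ᴴ * Hᴴ)⁻¹

/-!
In the paper's notation `W = H V_{g₀}` is the desired signal, `X` the received covariance and
`R = X - W Wᴴ` its interference-plus-noise part. A linear receiver `U` has error covariance
`E(U) = 1 - Uᴴ W - Wᴴ U + Uᴴ X U`. Completing the square around `U = X⁻¹ W` gives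
`E(X⁻¹ W) ≤ E(U)`, and the Woodbury identity gives `E(X⁻¹ W) = (1 + Wᴴ R⁻¹ W)⁻¹`, so that
`-log det (1 + W Wᴴ R⁻¹) = log det E(X⁻¹ W)`. Since `log det` is concave, it lies below its tangent
at any positive definite `Q`, whence `log det E(X⁻¹ W) ≤ Tr (Q⁻¹ E(U)) + log det Q - d`. The right
side is the matrix part of the surrogate, whose scalar part exceeds `(F - C) η` by
`(η + C - (η⁰ + C⁰))² / 2`.
-/

section LogDet

open scoped ComplexOrder MatrixOrder

variable {𝕜 n : Type*} [RCLike 𝕜] [Fintype n] [DecidableEq n] {P S : Matrix n n 𝕜}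

/-- The real number `log det P` of a positive definite matrix `P`. The determinant of such a matrix
is real; for other matrices the value is that of `Real.log` at the real part of the determinant. -/
noncomputable def logDet (P : Matrix n n 𝕜) : ℝ :=
  Real.log (RCLike.re P.det)

theorem re_det_pos (hP : P.PosDef) : 0 < RCLike.re P.det :=
  (RCLike.pos_iff.mp hP.det_pos).1

theorem logDet_mul (hP : P.PosDef) (hS : S.PosDef) : logDet (P * S) = logDet P + logDet S := by
  have him : RCLike.im P.det = 0 := (RCLike.pos_iff.mp hP.det_pos).2
  rw [logDet, det_mul, RCLike.mul_re, him, zero_mul, sub_zero,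
    Real.log_mul (re_det_pos hP).ne' (re_det_pos hS).ne', logDet, logDet]

theorem logDet_inv (hP : P.PosDef) : logDet P⁻¹ = -logDet P := by
  have hone : logDet (P⁻¹ * P) = 0 := by
    rw [nonsing_inv_mul P ((isUnit_iff_isUnit_det P).mp hP.isUnit), logDet, det_one, RCLike.one_re,
      Real.log_one]
  rw [logDet_mul hP.inv hP] at hone
  exact eq_neg_of_add_eq_zero_left hone

theorem logDet_add_card_le_re_trace (hP : P.PosDef) :
    logDet P + Fintype.card n ≤ RCLike.re P.trace := by
  have hdet : RCLike.re P.det = ∏ i, hP.isHermitian.eigenvalues i := by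
    rw [hP.isHermitian.det_eq_prod_eigenvalues, ← RCLike.ofReal_prod, RCLike.ofReal_re]
  have htrace : RCLike.re P.trace = ∑ i, hP.isHermitian.eigenvalues i := by
    rw [hP.isHermitian.trace_eq_sum_eigenvalues, ← RCLike.ofReal_sum, RCLike.ofReal_re]
  calc logDet P + Fintype.card n
      = ∑ i, (Real.log (hP.isHermitian.eigenvalues i) + 1) := by
        rw [logDet, hdet, Real.log_prod fun i _ ↦ (hP.eigenvalues_pos i).ne',
          Finset.sum_add_distrib, Finset.sum_const, Finset.card_univ, nsmul_one]
    _ ≤ ∑ i, hP.isHermitian.eigenvalues i := by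
        gcongr with i
        linarith [Real.log_le_sub_one_of_pos (hP.eigenvalues_pos i)]
    _ = RCLike.re P.trace := htrace.symm

theorem logDet_add_logDet_add_card_le_re_trace_mul (hP : P.PosDef) (hS : S.PosDef) :
    logDet P + logDet S + Fintype.card n ≤ RCLike.re (P * S).trace := by
  obtain ⟨B, hB, hPB⟩ := CStarAlgebra.isStrictlyPositive_iff_eq_star_mul_self.mp
    hP.isStrictlyPositive
  have hdet : (P * S).det = (B * S * star B).det := by
    rw [hPB, Matrix.mul_assoc, det_mul_comm]
  have htrace : (P * S).trace = (B * S * star B).trace := by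
    rw [hPB, Matrix.mul_assoc, trace_mul_comm]
  rw [← logDet_mul hP hS, logDet, hdet, htrace]
  exact logDet_add_card_le_re_trace (hB.posDef_star_right_conjugate_iff.mpr hS)

theorem logDet_le_re_trace_inv_mul (hP : P.PosDef) (hS : S.PosDef) :
    logDet S ≤ RCLike.re (P⁻¹ * S).trace + logDet P - Fintype.card n := by
  have := logDet_add_logDet_add_card_le_re_trace_mul hP.inv hS
  rw [logDet_inv hP] at this
  linarith

omit [DecidableEq n] in
theorem re_trace_mul_nonneg (hP : P.PosSemidef) (hS : S.PosSemidef) :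
    0 ≤ RCLike.re (P * S).trace := by
  classical
  obtain ⟨B, rfl⟩ := CStarAlgebra.nonneg_iff_eq_star_mul_self.mp hP.nonneg
  rw [star_eq_conjTranspose, Matrix.mul_assoc, trace_mul_comm]
  exact (RCLike.nonneg_iff.mp (hS.mul_mul_conjTranspose_same B).trace_nonneg).1

end LogDet

section MSE

variable {α n m : Type*} [CommRing α] [Fintype n] [DecidableEq m]

theorem inv_one_add_mul_inv_mul [DecidableEq n] [Fintype m] {R : Matrix n n α} {W : Matrix n m α}
    {V : Matrix m n α} (hR : IsUnit R) (hX : IsUnit (R + W * V)) :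
    (1 + V * R⁻¹ * W)⁻¹ = 1 - V * (R + W * V)⁻¹ * W := by
  have hRR : R⁻¹⁻¹ = R := nonsing_inv_nonsing_inv R ((isUnit_iff_isUnit_det R).mp hR)
  have hX' : IsUnit (R⁻¹⁻¹ + W * (1 : Matrix m m α)⁻¹ * V) := by
    rwa [hRR, inv_one, Matrix.mul_one]
  have hwoodbury := add_mul_mul_inv_eq_sub 1 V R⁻¹ W isUnit_one (isUnit_nonsing_inv_iff.mpr hR) hX'
  simpa only [hRR, inv_one, Matrix.mul_one, Matrix.one_mul] using hwoodbury

variable [StarRing α]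

/-- The error covariance of the linear receiver `U` estimating a white signal `s` from an
observation of covariance `X` whose cross-covariance with `s` is `W`. -/
def mseMatrix (X : Matrix n n α) (W U : Matrix n m α) : Matrix m m α :=
  1 - Uᴴ * W - Wᴴ * U + Uᴴ * X * U

theorem mseMatrix_eq_add [DecidableEq n] {X : Matrix n n α} (hX : X.IsHermitian) (hu : IsUnit X)
    (W U : Matrix n m α) :
    mseMatrix X W U = (1 - Wᴴ * X⁻¹ * W) + (U - X⁻¹ * W)ᴴ * X * (U - X⁻¹ * W) := by
  have hdet : IsUnit X.det := (isUnit_iff_isUnit_det X).mp hu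
  have hadj : (U - X⁻¹ * W)ᴴ * X = Uᴴ * X - Wᴴ := by
    rw [conjTranspose_sub, conjTranspose_mul, hX.inv.eq, Matrix.sub_mul,
      nonsing_inv_mul_cancel_right _ _ hdet]
  have hcross : Uᴴ * X * (X⁻¹ * W) = Uᴴ * W := by
    rw [← Matrix.mul_assoc, mul_nonsing_inv_cancel_right _ _ hdet]
  rw [mseMatrix, hadj, Matrix.mul_sub, Matrix.sub_mul, Matrix.sub_mul, hcross, Matrix.mul_assoc Wᴴ]
  abel

end MSE

section Rate

open scoped ComplexOrder

variable {𝕜 n m : Type*} [RCLike 𝕜] [Fintype n] [DecidableEq m]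

theorem re_trace_mul_mseMatrix [Fintype m] {P : Matrix m m 𝕜} (hP : P.IsHermitian)
    (X : Matrix n n 𝕜) (W U : Matrix n m 𝕜) :
    RCLike.re (P * mseMatrix X W U).trace
      = RCLike.re (P * (1 + Uᴴ * X * U)).trace - 2 * RCLike.re (P * Uᴴ * W).trace := by
  have hconj : RCLike.re (P * (Wᴴ * U)).trace = RCLike.re (P * (Uᴴ * W)).trace := by
    rw [← RCLike.conj_re (P * (Uᴴ * W)).trace, starRingEnd_apply, ← trace_conjTranspose,
      conjTranspose_mul, conjTranspose_mul, conjTranspose_conjTranspose, hP.eq, trace_mul_comm]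
  rw [mseMatrix]
  simp only [Matrix.mul_add, Matrix.mul_sub, trace_add, trace_sub, map_add, map_sub, hconj,
    Matrix.mul_assoc P Uᴴ W]
  ring

variable [DecidableEq n] {R : Matrix n n 𝕜}

theorem posDef_one_add_conjTranspose_mul_inv_mul [Finite m] (hR : R.PosDef) (W : Matrix n m 𝕜) :
    (1 + Wᴴ * R⁻¹ * W).PosDef :=
  PosDef.one.add_posSemidef (hR.inv.posSemidef.conjTranspose_mul_mul_same W)

variable [Fintype m]

theorem inv_one_add_conjTranspose_mul_inv_mul (hR : R.PosDef) (W : Matrix n m 𝕜) :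
    (1 + Wᴴ * R⁻¹ * W)⁻¹ = 1 - Wᴴ * (R + W * Wᴴ)⁻¹ * W :=
  inv_one_add_mul_inv_mul hR.isUnit
    (hR.add_posSemidef (posSemidef_self_mul_conjTranspose W)).isUnit

theorem posDef_one_sub_conjTranspose_mul_inv_mul (hR : R.PosDef) (W : Matrix n m 𝕜) :
    (1 - Wᴴ * (R + W * Wᴴ)⁻¹ * W).PosDef :=
  inv_one_add_conjTranspose_mul_inv_mul hR W ▸ (posDef_one_add_conjTranspose_mul_inv_mul hR W).inv

theorem logDet_one_sub_conjTranspose_mul_inv_mul (hR : R.PosDef) (W : Matrix n m 𝕜) :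
    logDet (1 - Wᴴ * (R + W * Wᴴ)⁻¹ * W) = -logDet (1 + W * Wᴴ * R⁻¹) := by
  rw [← inv_one_add_conjTranspose_mul_inv_mul hR W,
    logDet_inv (posDef_one_add_conjTranspose_mul_inv_mul hR W), logDet, logDet, Matrix.mul_assoc W,
    det_one_add_mul_comm]

theorem neg_logDet_le_re_trace_inv_mul_mseMatrix (hR : R.PosDef) (W U : Matrix n m 𝕜)
    {Q : Matrix m m 𝕜} (hQ : Q.PosDef) :
    -logDet (1 + W * Wᴴ * R⁻¹)
      ≤ RCLike.re (Q⁻¹ * mseMatrix (R + W * Wᴴ) W U).trace + logDet Q - Fintype.card m := by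
  have hX : (R + W * Wᴴ).PosDef := hR.add_posSemidef (posSemidef_self_mul_conjTranspose W)
  have hexcess : 0 ≤ RCLike.re (Q⁻¹ * ((U - (R + W * Wᴴ)⁻¹ * W)ᴴ * (R + W * Wᴴ)
      * (U - (R + W * Wᴴ)⁻¹ * W))).trace :=
    re_trace_mul_nonneg hQ.inv.posSemidef (hX.posSemidef.conjTranspose_mul_mul_same _)
  have htangent := logDet_le_re_trace_inv_mul hQ (posDef_one_sub_conjTranspose_mul_inv_mul hR W)
  rw [logDet_one_sub_conjTranspose_mul_inv_mul hR W] at htangent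
  rw [mseMatrix_eq_add hX.isHermitian hX.isUnit W U, Matrix.mul_add, trace_add, map_add]
  linarith

end Rate

section Surrogate

open scoped ComplexOrder

variable {N M d G : ℕ} (H : Matrix (Fin N) (Fin M) ℂ) (V : Fin G → Matrix (Fin M) (Fin d) ℂ)

theorem posDef_Xmat_sub {σ : ℝ} (hσ : σ ≠ 0) (g₀ : Fin G) :
    (Xmat H σ V - H * V g₀ * (H * V g₀)ᴴ).PosDef := by
  have hnoise : ((σ : ℂ) ^ 2 • (1 : Matrix (Fin N) (Fin N) ℂ)).PosDef :=
    PosDef.one.smul (by exact_mod_cast sq_pos_of_ne_zero hσ)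
  have hsum : Xmat H σ V - H * V g₀ * (H * V g₀)ᴴ
      = ∑ g ∈ Finset.univ.erase g₀, H * V g * (H * V g)ᴴ + (σ : ℂ) ^ 2 • 1 := by
    rw [Xmat, ← Finset.sum_erase_add _ _ (Finset.mem_univ g₀)]
    simp only [conjTranspose_mul, Matrix.mul_assoc]
    abel
  rw [hsum]
  exact PosDef.posSemidef_add
    (posSemidef_sum _ fun g _ ↦ posSemidef_self_mul_conjTranspose (H * V g)) hnoise

theorem posDef_one_sub_conjTranspose_Xmat_inv_mul_mul {σ : ℝ} (hσ : σ ≠ 0) (g₀ : Fin G) :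
    (1 - ((Xmat H σ V)⁻¹ * (H * V g₀))ᴴ * (H * V g₀)).PosDef := by
  have hR := posDef_Xmat_sub H V hσ g₀
  have hX := hR.add_posSemidef (posSemidef_self_mul_conjTranspose (H * V g₀))
  have hQ := posDef_one_sub_conjTranspose_mul_inv_mul hR (H * V g₀)
  rw [sub_add_cancel] at hX hQ
  rwa [conjTranspose_mul, hX.inv.isHermitian.eq]

theorem sum_trace_add_trace_eq_trace_mul_Xmat (σ : ℝ) (U : Matrix (Fin N) (Fin d) ℂ)
    (P : Matrix (Fin d) (Fin d) ℂ) :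
    ∑ g, ((V g)ᴴ * (Hᴴ * U * P * Uᴴ * H) * V g).trace
        + (P * (1 + (σ : ℂ) ^ 2 • (Uᴴ * U))).trace
      = (P * (1 + Uᴴ * Xmat H σ V * U)).trace := by
  have hcycle (g : Fin G) : ((V g)ᴴ * (Hᴴ * U * P * Uᴴ * H) * V g).trace
      = (P * (Uᴴ * (H * V g * (V g)ᴴ * Hᴴ) * U)).trace := by
    rw [show (V g)ᴴ * (Hᴴ * U * P * Uᴴ * H) * V g = (V g)ᴴ * Hᴴ * U * (P * Uᴴ * H * V g) by
      simp only [Matrix.mul_assoc], trace_mul_comm]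
    simp only [Matrix.mul_assoc]
  simp only [hcycle, Xmat, Matrix.mul_add, Matrix.add_mul, Matrix.mul_sum, Matrix.sum_mul,
    trace_add, trace_sum, Matrix.mul_smul, Matrix.smul_mul, Matrix.mul_one]
  ring

theorem neg_log_det_one_add_mul_Jmat_le {σ : ℝ} (hσ : σ ≠ 0) (g₀ : Fin G)
    (U : Matrix (Fin N) (Fin d) ℂ) {Q : Matrix (Fin d) (Fin d) ℂ} (hQ : Q.PosDef) :
    -Real.log (1 + H * V g₀ * (V g₀)ᴴ * Hᴴ * Jmat H σ g₀ V).det.re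
      ≤ (Q⁻¹ * mseMatrix (Xmat H σ V) (H * V g₀) U).trace.re + Real.log Q.det.re - d := by
  have h := neg_logDet_le_re_trace_inv_mul_mseMatrix (posDef_Xmat_sub H V hσ g₀) (H * V g₀) U hQ
  have hW : H * V g₀ * (V g₀)ᴴ * Hᴴ = H * V g₀ * (H * V g₀)ᴴ := by
    rw [conjTranspose_mul, Matrix.mul_assoc _ (V g₀)ᴴ]
  rw [sub_add_cancel, Fintype.card_fin] at h
  rw [Jmat, hW]
  exact h

theorem stmt0_general {σ : ℝ} (hσ : σ ≠ 0) (g₀ : Fin G) (F C0 η0 : ℝ)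
    (U : Matrix (Fin N) (Fin d) ℂ) {Q : Matrix (Fin d) (Fin d) ℂ} (hQ : Q.PosDef)
    (A : Matrix (Fin M) (Fin M) ℂ) (hA : A = Hᴴ * U * Q⁻¹ * Uᴴ * H)
    (B : Matrix (Fin d) (Fin M) ℂ) (hB : B = -(Q⁻¹ * Uᴴ * H))
    (b : ℝ)
    (hb : b = (Q⁻¹ * (1 + (σ : ℂ) ^ 2 • (Uᴴ * U))).trace.re
      + Real.log Q.det.re + (η0 + C0) ^ 2 / 2 - d) (C η : ℝ) :
    (∑ g, ((V g)ᴴ * A * V g).trace.re) + 2 * (B * V g₀).trace.re + (η ^ 2 + C ^ 2) / 2 + F * η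
        - (η0 + C0) * (η + C) + b
      ≥ (F - C) * η - Real.log (1 + H * V g₀ * (V g₀)ᴴ * Hᴴ * Jmat H σ g₀ V).det.re := by
  have hquad := congrArg Complex.re (sum_trace_add_trace_eq_trace_mul_Xmat H V σ U Q⁻¹)
  rw [← hA, Complex.add_re, Complex.re_sum] at hquad
  have hlin : (B * V g₀).trace.re = -(Q⁻¹ * Uᴴ * (H * V g₀)).trace.re := by
    rw [hB, Matrix.neg_mul, trace_neg, Complex.neg_re, Matrix.mul_assoc _ H]
  have hmse : (Q⁻¹ * mseMatrix (Xmat H σ V) (H * V g₀) U).trace.re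
      = (Q⁻¹ * (1 + Uᴴ * Xmat H σ V * U)).trace.re - 2 * (Q⁻¹ * Uᴴ * (H * V g₀)).trace.re :=
    re_trace_mul_mseMatrix hQ.inv.isHermitian _ _ _
  have hrate := neg_log_det_one_add_mul_Jmat_le H V hσ g₀ U hQ
  have hscalar := sq_nonneg (η + C - (η0 + C0))
  linarith

end Surrogate

/-- Property (1.1) of Proposition 1: the quadratic surrogate `f` upper bounds
`(F − C) η − log det(I + H V_{g₀} V_{g₀}ᴴ Hᴴ J(V))`. -/
theorem stmt0 (N M d G : ℕ) (hN : 0 < N) (hM : 0 < M) (hd : 0 < d) (hG : 0 < G)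
    (H : Matrix (Fin N) (Fin M) ℂ) (σ : ℝ) (hσ : 0 < σ) (g₀ : Fin G)
    (V0 : Fin G → Matrix (Fin M) (Fin d) ℂ) (F C0 η0 : ℝ)
    (U0 : Matrix (Fin N) (Fin d) ℂ) (hU0 : U0 = (Xmat H σ V0)⁻¹ * (H * V0 g₀))
    (Q0 : Matrix (Fin d) (Fin d) ℂ) (hQ0 : Q0 = 1 - U0ᴴ * (H * V0 g₀))
    (A : Matrix (Fin M) (Fin M) ℂ) (hA : A = Hᴴ * U0 * Q0⁻¹ * U0ᴴ * H)
    (B : Matrix (Fin d) (Fin M) ℂ) (hB : B = -(Q0⁻¹ * U0ᴴ * H))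
    (b : ℝ)
    (hb : b = ((Q0⁻¹ * (1 + ((σ : ℂ) ^ 2) • (U0ᴴ * U0))).trace).re
      + Real.log (Q0.det.re) + (η0 + C0) ^ 2 / 2 - d)
    (f : ℝ → ℝ → (Fin G → Matrix (Fin M) (Fin d) ℂ) → ℝ)
    (hf : ∀ C η V, f C η V = (∑ g, (((V g)ᴴ * A * V g).trace).re)
      + 2 * ((B * V g₀).trace).re + (η ^ 2 + C ^ 2) / 2 + F * η
      - (η0 + C0) * (η + C) + b) :
    ∀ (C η : ℝ) (V : Fin G → Matrix (Fin M) (Fin d) ℂ),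
      f C η V ≥ (F - C) * η
        - Real.log ((((1 : Matrix (Fin N) (Fin N) ℂ)
            + H * V g₀ * (V g₀)ᴴ * Hᴴ * Jmat H σ g₀ V).det).re) := by
  intro C η V
  have hQ := posDef_one_sub_conjTranspose_Xmat_inv_mul_mul H V0 hσ.ne' g₀
  rw [← hU0, ← hQ0] at hQ
  rw [hf]
  exact stmt0_general H V hσ.ne' g₀ F C0 η0 U0 hQ A hA B hB b hb C η
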